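/- arXiv:2012.03174 — 2 statements merged into one kernel-verified Lean document; each statement's English description precedes it below -/
import Mathlib

section
/- Let 𝒳 be a countable attribute set, let τ ≥ 1, and let H be a connected attributed graph on τ+1 vertices whose underlying graph admits the covering sequence (r_1, ..., r_τ). Then for all attributed graphs G_1, G_2 on n vertices with attributes in 𝒳: if the non-induced subgraph counts satisfy C̄(G_1; H) ≠ C̄(G_2; H), then Enc_{(r_1,...,r_τ)}(G_1) ≠ Enc_{(r_1,...,r_τ)}(G_2). That is, the RNP encoding with recursion parameters (r_1, ..., r_τ) also determines the number of not-necessarily-induced copies of every connected graph H admitting that covering sequence. -/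
/-!
The number of injective attribute-preserving homomorphisms `H → G` equals the number of copies of
`H` in `G` times the order of the automorphism group of the attributed graph `H`
(`card_emb_eq_mul`), so it suffices to recover the former from the encoding.

Embeddings are counted by the image `v` of the first vertex of the covering sequence. Since
homomorphisms do not increase distances, the covering condition forces the remaining vertices into
the punctured ball around `v`; the edges of `H` at its first vertex become the requirement that
certain adjacency bits of the augmented attributes be `true` (`card_root_peel`). The rest of `H` is
then an instance of the same problem with one vertex less, and induction shows that the number of
embeddings rooted at `v` is a function of the encoding of `v` (`exists_root_count`). Allowing each
vertex of the pattern a set of admissible attributes, instead of a single one, is what makes this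
induction work for non-induced copies. Summing over `v` gives a function of the graph encoding.
-/

open Classical

noncomputable section

/-- The type of RNP vertex encodings with `τ` recursion levels and attribute type `𝒳`:
at level `0` an encoding is just an attribute, and at level `τ+1` it is the pair of the
vertex attribute and the multiset of level-`τ` encodings (with `Bool`-augmented attributes)
of the vertices of the punctured neighborhood. -/
def RNPType : ℕ → Type → Type
  | 0 => fun 𝒳 => 𝒳
  | (τ + 1) => fun 𝒳 => 𝒳 × Multiset (RNPType τ (𝒳 × Bool))

/-- Auxiliary fully-explicit version of the RNP vertex encoding `h_G(v; rs)`: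
for the empty sequence it is the attribute `X v`; for `r :: rs` it is the pair of `X v`
and the multiset of the `rs`-encodings (computed in the induced subgraph on
`N_r(v) \ {v}` with attributes augmented by the indicator of adjacency to `v`)
of all vertices of that induced subgraph. -/
noncomputable def rnpHAux : (rs : List ℕ) → (V : Type) → (inst : Fintype V) → (𝒳 : Type) →
    (G : SimpleGraph V) → (X : V → 𝒳) → V → RNPType rs.length 𝒳
  | [], _V, _inst, _𝒳, _G, X, v => X v
  | (r :: rs), V, inst, 𝒳, G, X, v =>
      letI : Fintype V := inst
      -- the punctured ball `N_r(v) \ {v}`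
      let S : Set V := {u | (∃ w : G.Walk v u, w.length ≤ r) ∧ u ≠ v}
      letI instS : Fintype S := Fintype.ofFinite S
      (X v, (Finset.univ : Finset S).val.map
        (fun u => rnpHAux rs S instS (𝒳 × Bool) (G.induce S)
          (fun w => ((X w.1, decide (G.Adj w.1 v)) : 𝒳 × Bool)) u))

/-- The recursive neighborhood pooling (RNP) vertex encoding `h_G(v; rs)`. -/
noncomputable def rnpH {V 𝒳 : Type} [inst : Fintype V] (rs : List ℕ)
    (G : SimpleGraph V) (X : V → 𝒳) (v : V) : RNPType rs.length 𝒳 :=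
  rnpHAux rs V inst 𝒳 G X v

/-- The RNP graph encoding `Enc_{rs}(G) = {{ h_G(v; rs) : v ∈ V(G) }}`. -/
noncomputable def rnpEnc {V 𝒳 : Type} [Fintype V] (G : SimpleGraph V) (X : V → 𝒳)
    (rs : List ℕ) : Multiset (RNPType rs.length 𝒳) :=
  (Finset.univ : Finset V).val.map (fun v => rnpH rs G X v)

/-- Attribute-preserving isomorphism of attributed graphs. -/
def AttrIso {V W 𝒳 : Type} (G : SimpleGraph V) (X : V → 𝒳)
    (H : SimpleGraph W) (Y : W → 𝒳) : Prop :=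
  ∃ φ : G ≃g H, ∀ v : V, Y (φ v) = X v

/-- Induced subgraph count `C(G;H)` for attributed graphs: the number of vertex subsets
`S` of `G` such that the induced attributed subgraph `G(S)` is isomorphic to `(H, Y)`. -/
noncomputable def inducedCount {V W 𝒳 : Type} (G : SimpleGraph V) (X : V → 𝒳)
    (H : SimpleGraph W) (Y : W → 𝒳) : ℕ :=
  Nat.card {S : Set V // AttrIso (G.induce S) (fun u => X u.1) H Y}

/-- Non-induced subgraph count `C̄(G;H)` for attributed graphs: the number of pairs of a
vertex subset `S` of `G` and a subgraph of the induced subgraph `G(S)` on the same vertex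
set `S` that is isomorphic to `(H, Y)` as an attributed graph. -/
noncomputable def subgraphCount {V W 𝒳 : Type} (G : SimpleGraph V) (X : V → 𝒳)
    (H : SimpleGraph W) (Y : W → 𝒳) : ℕ :=
  Nat.card {p : (S : Set V) × SimpleGraph ↥S //
    p.2 ≤ G.induce p.1 ∧ AttrIso p.2 (fun u => X u.1) H Y}

/-- The tail set `{σ i, σ (i+1), ..., σ τ}` of a vertex ordering `σ`. -/
def coverSet {τ : ℕ} (σ : Equiv.Perm (Fin (τ + 1))) (i : Fin (τ + 1)) :
    Set (Fin (τ + 1)) :=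
  σ '' {j | i ≤ j}

/-- `σ` is a vertex covering sequence for `H` with respect to `r`: for every
`i ∈ {1, ..., τ}`, the induced subgraph `H_i` of `H` on `S_i = {σ i, ..., σ (τ+1)}` is
connected and every vertex of `S_i` is at distance at most `r i` from `σ i` in `H_i`. -/
def IsVertexCoveringSeq {τ : ℕ} (H : SimpleGraph (Fin (τ + 1))) (r : Fin τ → ℕ)
    (σ : Equiv.Perm (Fin (τ + 1))) : Prop :=
  ∀ i : Fin τ,
    (H.induce (coverSet σ i.castSucc)).Connected ∧
    ∀ u : coverSet σ i.castSucc,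
      (H.induce (coverSet σ i.castSucc)).dist
        ⟨σ i.castSucc, ⟨i.castSucc, Set.mem_setOf_eq ▸ le_refl _, rfl⟩⟩ u ≤ r i

/-- `H` admits the covering sequence `r` iff some vertex ordering is a vertex covering
sequence with respect to `r`. -/
def AdmitsCoveringSeq {τ : ℕ} (H : SimpleGraph (Fin (τ + 1))) (r : Fin τ → ℕ) : Prop :=
  ∃ σ : Equiv.Perm (Fin (τ + 1)), IsVertexCoveringSeq H r σ

end

/-! ### Ordered covering sequences and constrained embeddings -/

/-- The covering sequence `rs` is realised along the natural order of `Fin (rs.length + 1)`, i.e.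
for each `i` every `j ≥ i` is joined to `i` by a walk of length at most `rs[i]` that stays inside
`{x | i ≤ x}`. -/
def OrdCover (rs : List ℕ) (H : SimpleGraph (Fin (rs.length + 1))) : Prop :=
  ∀ (i : Fin rs.length) (j : Set.Ici i.castSucc),
    ∃ w : (H.induce (Set.Ici i.castSucc)).Walk ⟨i.castSucc, Set.self_mem_Ici⟩ j, w.length ≤ rs.get i

/-- Injective graph homomorphisms from `H` to `G` sending each vertex `w` to a vertex whose
attribute satisfies `P w`. Using a predicate rather than a prescribed attribute lets non-edges
of `H` leave the adjacency bit of an augmented attribute unconstrained. -/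
abbrev Emb {V W 𝒳 : Type} (G : SimpleGraph V) (X : V → 𝒳) (H : SimpleGraph W)
    (P : W → 𝒳 → Prop) : Type :=
  {f : W → V // Function.Injective f ∧ (∀ i j, H.Adj i j → G.Adj (f i) (f j)) ∧
    ∀ i, P i (X (f i))}

/-- The constraint on the remaining vertices once vertex `0` of `H` has been placed: neighbours
of `0` must carry the adjacency bit `true`. -/
def peelPred {k : ℕ} {𝒳 : Type} (H : SimpleGraph (Fin (k + 2))) (P : Fin (k + 2) → 𝒳 → Prop) :
    Fin (k + 1) → 𝒳 × Bool → Prop :=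
  fun i x => P i.succ x.1 ∧ (H.Adj i.succ 0 → x.2 = true)

/-- Partitioning embeddings by the image of a fixed vertex. -/
lemma card_emb_eq_sum {V W 𝒳 : Type} [Fintype V] [Finite W] (G : SimpleGraph V) (X : V → 𝒳)
    (H : SimpleGraph W) (P : W → 𝒳 → Prop) (a : W) :
    Nat.card (Emb G X H P) = ∑ v : V, Nat.card {f : Emb G X H P // f.1 a = v} := by
  rw [← Nat.card_sigma]
  exact Nat.card_congr (Equiv.sigmaFiberEquiv (fun f : Emb G X H P => f.1 a)).symm

/-- Dropping the first vertex of the order leaves a cover by the remaining radii. -/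
lemma OrdCover.tail {r : ℕ} {rs : List ℕ} {H : SimpleGraph (Fin ((r :: rs).length + 1))}
    (h : OrdCover (r :: rs) H) : OrdCover rs (H.comap Fin.succ) := by
  intro i j
  obtain ⟨w, hw⟩ := h i.succ ⟨Fin.succ j.1, by
    have := j.2
    simp only [Set.mem_Ici, Fin.le_def] at this ⊢
    simpa using this⟩
  have hne : ∀ x : Set.Ici (i.succ : Fin (rs.length + 1)).castSucc, x.1 ≠ 0 := by
    intro x hx
    have := x.2
    rw [hx] at this
    simp at this
  let φ : H.induce (Set.Ici (i.succ : Fin (rs.length + 1)).castSucc) →g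
      (H.comap Fin.succ).induce (Set.Ici i.castSucc) :=
    { toFun := fun x => ⟨Fin.pred x.1 (hne x), by
        have := x.2
        simp only [Set.mem_Ici, Fin.le_def] at this ⊢
        simp at this ⊢
        omega⟩
      map_rel' := by
        intro a b hab
        simpa using hab }
  refine ⟨(w.map φ).copy (Subtype.ext (Fin.ext rfl)) (Subtype.ext (Fin.ext rfl)), ?_⟩
  rw [SimpleGraph.Walk.length_copy, SimpleGraph.Walk.length_map]
  exact hw

/-! ### Rooted embedding counts are functions of vertex encodings -/

/-- Peeling off the root: an embedding sending `0` to `v` is the same as an embedding of the rest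
of `H` into the punctured ball around `v`; the covering hypothesis forces the image of an
embedding into the ball. -/
lemma card_root_peel {r : ℕ} {rs : List ℕ} {V 𝒳 : Type} [Finite V]
    (G : SimpleGraph V) (X : V → 𝒳)
    (H : SimpleGraph (Fin ((r :: rs).length + 1))) (P : Fin ((r :: rs).length + 1) → 𝒳 → Prop)
    (h : OrdCover (r :: rs) H) (v : V) (hv : P 0 (X v))
    (S : Set V) (hS : S = {u | (∃ w : G.Walk v u, w.length ≤ r) ∧ u ≠ v}) :
    Nat.card {f : Emb G X H P // f.1 0 = v} =
      Nat.card (Emb (G.induce S) (fun w => ((X w.1, decide (G.Adj w.1 v)) : 𝒳 × Bool))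
        (H.comap Fin.succ) (peelPred H P)) := by
  -- a walk of length at most `r` in `H` starting at `0` maps to a walk from `v` in `G`
  have hball : ∀ f : Emb G X H P, f.1 0 = v → ∀ i : Fin (rs.length + 1), f.1 i.succ ∈ S := by
    rintro ⟨f, hf, hadj, hP⟩ rfl i
    rw [hS]
    refine ⟨?_, fun e => Fin.succ_ne_zero i (hf e)⟩
    obtain ⟨w, hw⟩ := h ⟨0, by simp⟩ ⟨i.succ, Fin.zero_le _⟩
    let φ : H.induce (Set.Ici (Fin.castSucc (⟨0, by simp⟩ : Fin (r :: rs).length))) →g G :=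
      { toFun := fun x => f x.1
        map_rel' := fun {a b} hab => hadj _ _ hab }
    exact ⟨w.map φ, (SimpleGraph.Walk.length_map φ w).trans_le hw⟩
  refine Nat.card_congr
    { toFun := fun f => ⟨fun i => ⟨f.1.1 i.succ, hball f.1 f.2 i⟩, ?_, ?_, ?_⟩
      invFun := fun g => ⟨⟨Fin.cons v (fun i => (g.1 i).1), ?_, ?_, ?_⟩, rfl⟩
      left_inv := ?_
      right_inv := ?_ }
  · intro a b hab
    exact Fin.succ_injective _ (f.1.2.1 (Subtype.ext_iff.1 hab))
  · intro i j hij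
    exact f.1.2.2.1 _ _ hij
  · intro i
    refine ⟨f.1.2.2.2 _, fun ha => ?_⟩
    have := f.1.2.2.1 _ _ ha
    rw [f.2] at this
    simpa using this
  · refine Fin.cons_injective_iff.2 ⟨?_, fun a b hab => g.2.1 (Subtype.ext hab)⟩
    rintro ⟨i, hi⟩
    exact (hS.le (g.1 i).2).2 hi
  · intro i j hij
    have key : ∀ i, H.Adj (Fin.succ i) 0 → G.Adj (g.1 i).1 v := fun i hi => by
      simpa using (g.2.2.2 i).2 hi
    induction i using Fin.cases with
    | zero =>
      induction j using Fin.cases with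
      | zero => exact (hij.ne rfl).elim
      | succ j => exact (key j hij.symm).symm
    | succ i =>
      induction j using Fin.cases with
      | zero => exact key i hij
      | succ j => exact g.2.2.1 i j hij
  · intro i
    refine Fin.cases hv (fun i => ?_) i
    exact (g.2.2.2 i).1
  · rintro ⟨⟨f, hf⟩, rfl⟩
    refine Subtype.ext (Subtype.ext ?_)
    exact Fin.cons_self_tail f
  · rintro ⟨g, hg⟩
    rfl

/-- The vertex encoding determines the number of embeddings rooted at the vertex, by a function
depending only on the pattern. -/
lemma exists_root_count : ∀ (rs : List ℕ) (𝒳 : Type) (H : SimpleGraph (Fin (rs.length + 1)))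
    (P : Fin (rs.length + 1) → 𝒳 → Prop), OrdCover rs H →
    ∃ Φ : RNPType rs.length 𝒳 → ℕ, ∀ (V : Type) (inst : Fintype V) (G : SimpleGraph V)
      (X : V → 𝒳) (v : V),
      Nat.card {f : Emb G X H P // f.1 0 = v} = Φ (rnpHAux rs V inst 𝒳 G X v)
  | [], 𝒳, H, P, _ => by
    refine ⟨fun x : 𝒳 => if P 0 x then 1 else 0, ?_⟩
    intro V inst G X v
    have hsub : Subsingleton (Fin (([] : List ℕ).length + 1)) :=
      inferInstanceAs (Subsingleton (Fin 1))
    simp only [rnpHAux]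
    by_cases hP : P 0 (X v)
    · refine Eq.trans ?_ (if_pos hP).symm
      rw [Nat.card_eq_one_iff_unique]
      refine ⟨⟨?_⟩, ⟨⟨⟨fun _ => v, fun a b _ => Subsingleton.elim a b, ?_, ?_⟩, rfl⟩⟩⟩
      · rintro ⟨f, hf⟩ ⟨g, hg⟩
        refine Subtype.ext (Subtype.ext (funext fun i => ?_))
        rw [Subsingleton.elim i 0]
        exact hf.trans hg.symm
      · intro i j hij
        exact (hij.ne (Subsingleton.elim i j)).elim
      · intro i
        rw [Subsingleton.elim i 0]
        exact hP
    · refine Eq.trans ?_ (if_neg hP).symm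
      rw [Nat.card_eq_zero]
      refine Or.inl ⟨?_⟩
      rintro ⟨f, rfl⟩
      exact hP (f.2.2.2 0)
  | r :: rs, 𝒳, H, P, h => by
    obtain ⟨Φ, hΦ⟩ := exists_root_count rs (𝒳 × Bool) (H.comap Fin.succ) (peelPred H P) h.tail
    refine ⟨fun x : 𝒳 × Multiset (RNPType rs.length (𝒳 × Bool)) =>
      if P 0 x.1 then (x.2.map Φ).sum else 0, ?_⟩
    intro V inst G X v
    simp only [rnpHAux]
    by_cases hP : P 0 (X v)
    · refine Eq.trans ?_ (if_pos hP).symm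
      rw [card_root_peel G X H P h v hP _ rfl]
      let _ : Fintype {u | (∃ w : G.Walk v u, w.length ≤ r) ∧ u ≠ v} := Fintype.ofFinite _
      rw [card_emb_eq_sum _ _ _ _ 0, Multiset.map_map]
      exact Finset.sum_congr rfl fun u _ => hΦ _ _ _ _ u
    · refine Eq.trans ?_ (if_neg hP).symm
      rw [Nat.card_eq_zero]
      refine Or.inl ⟨?_⟩
      rintro ⟨f, rfl⟩
      exact hP (f.2.2.2 0)

/-! ### Embeddings versus subgraph copies -/

/-- The type of attribute-preserving isomorphisms between attributed graphs. -/
def AIso {V W 𝒳 : Type} (G : SimpleGraph V) (X : V → 𝒳) (H : SimpleGraph W) (Y : W → 𝒳) : Type :=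
  {φ : G ≃g H // ∀ v, Y (φ v) = X v}

/-- An embedding of `H` is a copy of `H` in `G` together with an identification of that copy
with `H`, and the identifications form a torsor under the automorphism group of `(H, Y)`. -/
lemma card_emb_eq_mul {V W 𝒳 : Type} [Finite V] [Finite W] (G : SimpleGraph V) (X : V → 𝒳)
    (H : SimpleGraph W) (Y : W → 𝒳) :
    Nat.card (Emb G X H (fun w x => x = Y w)) =
      subgraphCount G X H Y * Nat.card (AIso H Y H Y) := by
  unfold subgraphCount
  rw [← Nat.card_prod]
  let T := {p : (S : Set V) × SimpleGraph ↥S //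
    p.2 ≤ G.induce p.1 ∧ AttrIso p.2 (fun u => X u.1) H Y}
  -- identifications of a fixed copy with `H` correspond to automorphisms of `(H, Y)`
  have e₁ : (Σ p : T, AIso p.1.2 (fun u => X u.1) H Y) ≃ T × AIso H Y H Y := by
    refine (Equiv.sigmaCongrRight fun p : T => ?_).trans (Equiv.sigmaEquivProd _ _)
    have hex : ∃ φ : p.1.2 ≃g H, ∀ v, Y (φ v) = X v.1 := p.2.2
    let φ := hex.choose
    have hφ := hex.choose_spec
    exact
      { toFun := fun ψ => ⟨φ.symm.trans ψ.1, fun w => by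
          have h1 := hφ (φ.symm w)
          have h2 := ψ.2 (φ.symm w)
          change Y (φ (φ.symm w)) = _ at h1
          rw [φ.apply_symm_apply] at h1
          exact h2.trans h1.symm⟩
        invFun := fun α => ⟨φ.trans α.1, fun v => (α.2 (φ v)).trans (hφ v)⟩
        left_inv := fun ψ => Subtype.ext (by ext x; simp)
        right_inv := fun α => Subtype.ext (by ext x; simp) }
  rw [← Nat.card_congr e₁]
  symm
  refine Nat.card_congr (Equiv.ofBijective (fun q => ⟨fun w => (q.2.1.symm w).1, ?_, ?_, ?_⟩) ⟨?_, ?_⟩)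
  · exact Subtype.val_injective.comp q.2.1.symm.injective
  · intro i j hij
    exact q.1.2.1 (q.2.1.symm.map_adj_iff.2 hij)
  · intro i
    have := q.2.2 (q.2.1.symm i)
    rw [q.2.1.apply_symm_apply] at this
    exact this.symm
  · rintro ⟨⟨⟨S, F⟩, hF⟩, φ, hφ⟩ ⟨⟨⟨S', F'⟩, hF'⟩, φ', hφ'⟩ hq
    have hfun : ∀ w, (φ.symm w).1 = (φ'.symm w).1 := fun w => congrFun (Subtype.ext_iff.1 hq) w
    have hS : S = S' := by
      ext v
      constructor
      · intro hv
        have : v = _ := Eq.trans (by rw [φ.symm_apply_apply]) (hfun (φ ⟨v, hv⟩))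
        exact this.symm ▸ (φ'.symm (φ ⟨v, hv⟩)).2
      · intro hv
        have : v = _ := Eq.trans (by rw [φ'.symm_apply_apply]) (hfun (φ' ⟨v, hv⟩)).symm
        exact this.symm ▸ (φ.symm (φ' ⟨v, hv⟩)).2
    subst hS
    have hsymm : ∀ w, φ.symm w = φ'.symm w := fun w => Subtype.ext (hfun w)
    have happ : ∀ v, φ v = φ' v := fun v => by
      rw [← φ'.symm.injective.eq_iff, ← hsymm, φ.symm_apply_apply, φ'.symm_apply_apply]
    have hFF : F = F' := by
      ext a b
      rw [← φ.map_adj_iff, ← φ'.map_adj_iff, happ, happ]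
    subst hFF
    have : φ = φ' := by ext v; exact happ v
    subst this
    rfl
  · rintro ⟨f, hf, hadj, hP⟩
    let e : W ≃ Set.range f := Equiv.ofInjective f hf
    let F : SimpleGraph (Set.range f) := H.comap e.symm
    let φ : F ≃g H := ⟨e.symm, Iff.rfl⟩
    have hφ : ∀ v : Set.range f, Y (φ v) = X v.1 := by
      intro v
      obtain ⟨w, rfl⟩ := e.surjective v
      change Y (e.symm (e w)) = X (f w)
      rw [e.symm_apply_apply, hP]
    refine ⟨⟨⟨⟨Set.range f, F⟩, ?_, ⟨φ, hφ⟩⟩, ⟨φ, hφ⟩⟩, rfl⟩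
    intro a b hab
    obtain ⟨i, rfl⟩ := e.surjective a
    obtain ⟨j, rfl⟩ := e.surjective b
    have hij : H.Adj (e.symm (e i)) (e.symm (e j)) := hab
    rw [e.symm_apply_apply, e.symm_apply_apply] at hij
    exact hadj i j hij

/-! ### Relabelling the pattern along a covering sequence -/

/-- Relabelling the vertices of the pattern does not change the number of embeddings. -/
lemma card_emb_comap {V W W' 𝒳 : Type} (G : SimpleGraph V) (X : V → 𝒳)
    (H : SimpleGraph W) (P : W → 𝒳 → Prop) (e : W' ≃ W) :
    Nat.card (Emb G X H P) = Nat.card (Emb G X (H.comap e) (fun w => P (e w))) := by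
  refine Nat.card_congr
    { toFun := fun f => ⟨f.1 ∘ e, f.2.1.comp e.injective, fun i j h => f.2.2.1 _ _ h,
        fun i => f.2.2.2 _⟩
      invFun := fun f => ⟨f.1 ∘ e.symm, f.2.1.comp e.symm.injective,
        fun i j h => f.2.2.1 _ _ (by simpa using h), fun i => by
          have := f.2.2.2 (e.symm i)
          simp only [e.apply_symm_apply] at this
          exact this⟩
      left_inv := fun f => Subtype.ext (by ext; simp)
      right_inv := fun f => Subtype.ext (by ext; simp) }

/-- A vertex covering sequence becomes the natural order after relabelling the vertices. -/
lemma ordCover_of_isVertexCoveringSeq {τ : ℕ} {H : SimpleGraph (Fin (τ + 1))} {r : Fin τ → ℕ}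
    {σ : Equiv.Perm (Fin (τ + 1))} (h : IsVertexCoveringSeq H r σ)
    (hl : (List.ofFn r).length + 1 = τ + 1) :
    OrdCover (List.ofFn r) (H.comap ((finCongr hl).trans σ)) := by
  intro i j
  have hl' : (List.ofFn r).length = τ := by simp
  obtain ⟨hconn, hdist⟩ := h (Fin.cast hl' i)
  let e := (finCongr hl).trans σ
  have hj : e j.1 ∈ coverSet σ (Fin.cast hl' i).castSucc :=
    ⟨finCongr hl j.1, j.2, rfl⟩
  obtain ⟨w, hw⟩ := hconn.exists_walk_length_eq_dist
    ⟨σ (Fin.cast hl' i).castSucc, ⟨(Fin.cast hl' i).castSucc, Set.mem_ofPred_eq ▸ le_refl _, rfl⟩⟩ ⟨e j.1, hj⟩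
  let φ : H.induce (coverSet σ (Fin.cast hl' i).castSucc) →g
      (H.comap e).induce (Set.Ici i.castSucc) :=
    { toFun := fun x => ⟨e.symm x.1, by
        obtain ⟨x, y, hy, rfl⟩ := x
        simp only [e, Equiv.symm_trans_apply, Equiv.symm_apply_apply]
        exact hy⟩
      map_rel' := by
        intro a b hab
        simpa using hab }
  refine ⟨(w.map φ).copy ?_ ?_, ?_⟩
  · refine Subtype.ext ?_
    simp only [φ, e]
    change ((finCongr hl).trans σ).symm (σ _) = _
    simp
  · refine Subtype.ext ?_
    exact e.symm_apply_apply _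
  · have := hdist ⟨e j.1, hj⟩
    rw [SimpleGraph.Walk.length_copy, SimpleGraph.Walk.length_map, hw]
    refine this.trans (le_of_eq ?_)
    simp
    rfl

/-- If `H` is a connected attributed graph on `τ+1` vertices (attributes
in a countable set `𝒳`) whose underlying graph admits the covering sequence
`(r 1, ..., r τ)` of positive integers, then for all attributed graphs `G₁, G₂` on `n`
vertices, a difference in non-induced subgraph counts of `H` forces a difference of the
RNP encodings with recursion parameters `(r 1, ..., r τ)`. -/
theorem rnp_determines_subgraphCount {𝒳 : Type} [Countable 𝒳] {τ n : ℕ} (hτ : 1 ≤ τ)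
    (r : Fin τ → ℕ) (hr : ∀ i, 0 < r i)
    (H : SimpleGraph (Fin (τ + 1))) (Y : Fin (τ + 1) → 𝒳)
    (hH : H.Connected) (hcov : AdmitsCoveringSeq H r)
    (G₁ G₂ : SimpleGraph (Fin n)) (X₁ X₂ : Fin n → 𝒳)
    (hC : subgraphCount G₁ X₁ H Y ≠ subgraphCount G₂ X₂ H Y) :
    rnpEnc G₁ X₁ (List.ofFn r) ≠ rnpEnc G₂ X₂ (List.ofFn r) := by
  intro hE
  apply hC
  obtain ⟨σ, hσ⟩ := hcov
  have hl : (List.ofFn r).length + 1 = τ + 1 := by simp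
  obtain ⟨Φ, hΦ⟩ := exists_root_count (List.ofFn r) 𝒳 (H.comap ((finCongr hl).trans σ))
    (fun w x => x = Y (((finCongr hl).trans σ) w)) (ordCover_of_isVertexCoveringSeq hσ hl)
  have key : ∀ (G : SimpleGraph (Fin n)) (X : Fin n → 𝒳),
      subgraphCount G X H Y * Nat.card (AIso H Y H Y) =
        ((rnpEnc G X (List.ofFn r)).map Φ).sum := by
    intro G X
    rw [← card_emb_eq_mul, card_emb_comap _ _ _ _ ((finCongr hl).trans σ),
      card_emb_eq_sum _ _ _ _ 0, rnpEnc, Multiset.map_map]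
    exact Finset.sum_congr rfl fun v _ => hΦ _ _ _ _ v
  have hpos : 0 < Nat.card (AIso H Y H Y) := by
    have : Finite (AIso H Y H Y) := by
      have : Finite (H ≃g H) := Finite.of_injective (fun φ : H ≃g H => (φ : Fin (τ + 1) → _))
        DFunLike.coe_injective
      unfold AIso; infer_instance
    have : Nonempty (AIso H Y H Y) := ⟨⟨SimpleGraph.Iso.refl, fun _ => rfl⟩⟩
    exact Nat.card_pos
  apply Nat.eq_of_mul_eq_mul_right hpos
  rw [key, key, hE]
end

section
/- Let 𝒳 be a countable attribute set, let r ≥ 2, and let ℓ be an r-local graph function on attributed graphs on n vertices, i.e., ℓ(G) = φ({{ ψ(G(S)) : S ⊆ V(G), |S| ≤ r }}) for some isomorphism-invariant function ψ on attributed graphs with at most r vertices and some function φ on multisets. Then ℓ factors through the RNP encoding with recursion parameters (r-1, r-2, ..., 1): there exists a function ξ such that ℓ(G) = ξ(Enc_{(r-1, r-2, ..., 1)}(G)) for every attributed graph G on n vertices. Equivalently, Enc_{(r-1, ..., 1)}(G_1) = Enc_{(r-1, ..., 1)}(G_2) implies ℓ(G_1) = ℓ(G_2). -/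
/-!
The proof counts maps `W → V` by their *pattern*: which points of `W` are identified, which
become adjacent, and which attributes occur. Knowing the number of maps of each pattern with
`|W| ≤ r` is enough: the injective ones count every `k`-subset exactly `k!` times, so the multiset
of values `ψ(G(S))`, `|S| ≤ r`, can be recovered (`map_inducedValue_eq`).

That the encoding with parameters `(t, ..., 1)` determines all pattern counts with `|W| ≤ t + 1`
is proved by induction on `t` (`patCount_eq_of_enc_eq`).

* If the pattern is connected, fix `w₀ ∈ W` and sort the maps by the image `v` of `w₀`. The
  points not sent to `v` number at most `t`, and connectedness puts their images in the punctured
  ball of radius `t` around `v`; their adjacency to `v` is recorded by the augmented attribute.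
  Hence the rooted count is a pattern count in the punctured ball (`rooted_count_eq`), which the
  encoding of `v` determines by the induction hypothesis.
* If the pattern is disconnected, the product of the counts of its two parts equals its own count
  plus the counts of patterns with strictly more relations (`patCount_mul`). Induction on `|W|` and
  downward induction on the finite poset of patterns finish the argument
  (`patCount_eq_of_connected`). Allowing non-injective maps is what makes the product formula
  this simple.
-/

open Classical

/-! ### Patterns of maps into a graph -/

section Patterns

variable {V V' W 𝒳 : Type}

/-- A pattern on `W`: an "equality" relation and an "adjacency" relation, with no conditions
imposed, so that patterns on a finite `W` form a finite partial order. -/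
abbrev Pat (W : Type) : Type := (W → W → Prop) × (W → W → Prop)

/-- The pattern realised by a (not necessarily injective) map `f : W → V` into a graph. -/
def pat (G : SimpleGraph V) (f : W → V) : Pat W :=
  (fun a b => f a = f b, fun a b => G.Adj (f a) (f b))

/-- Restriction of a pattern to a subtype. -/
def Pat.res (T : Pat W) (p : W → Prop) : Pat {w // p w} :=
  (fun a b => T.1 a b, fun a b => T.2 a b)

/-- The graph on `W` joining two points that the pattern declares equal or adjacent. -/
def Pat.graph (T : Pat W) : SimpleGraph W :=
  SimpleGraph.fromRel (fun a b => T.1 a b ∨ T.2 a b)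

/-- The number of maps `W → V` realising exactly the pattern `T` and the attributes `Y`. -/
noncomputable def patCount (G : SimpleGraph V) (X : V → 𝒳) (T : Pat W) (Y : W → 𝒳) : ℕ :=
  Nat.card {f : W → V // pat G f = T ∧ X ∘ f = Y}

/-- The compatibility conditions that a pattern and an attribution satisfy whenever some map
realises them, as far as the class `{w | T.1 w₀ w}` of `w₀` is concerned. -/
def RootCompatible (T : Pat W) (Y : W → 𝒳) (w₀ : W) : Prop :=
  T.1 w₀ w₀ ∧ ∀ w, T.1 w₀ w → Y w = Y w₀ ∧ ∀ w',
    (T.1 w w' ↔ T.1 w₀ w') ∧ (T.1 w' w ↔ T.1 w₀ w') ∧ (T.2 w w' ↔ T.2 w' w₀) ∧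
    (T.2 w' w ↔ T.2 w' w₀) ∧ (T.1 w₀ w' → ¬ T.2 w' w₀)

lemma rootCompatible_of_realised (G : SimpleGraph V) (X : V → 𝒳) (f : W → V) (w₀ : W) :
    RootCompatible (pat G f) (X ∘ f) w₀ := by
  refine ⟨rfl, fun w hw => ?_⟩
  have hw : f w₀ = f w := hw
  refine ⟨by simp [hw], fun w' => ?_⟩
  simp only [pat]
  rw [hw]
  refine ⟨Iff.rfl, eq_comm, G.adj_comm _ _, Iff.rfl, fun h => ?_⟩
  rw [h]
  exact G.loopless.irrefl _

/-- A map sends a walk in the graph of its pattern to a walk that is no longer: steps between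
points declared equal are dropped. -/
lemma exists_walk_of_pat (G : SimpleGraph V) (f : W → V) {a b : W}
    (p : (pat G f).graph.Walk a b) : ∃ q : G.Walk (f a) (f b), q.length ≤ p.length := by
  induction p with
  | nil => exact ⟨.nil, le_rfl⟩
  | @cons a b c h p ih =>
    obtain ⟨q, hq⟩ := ih
    have h' : f a = f b ∨ G.Adj (f a) (f b) := by
      have := h
      simp only [Pat.graph, SimpleGraph.fromRel_adj, pat] at this
      rcases this.2 with (h | h) | (h | h)
      · exact .inl h
      · exact .inr h
      · exact .inl h.symm
      · exact .inr h.symm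
    rcases h' with h' | h'
    · exact ⟨q.copy h'.symm rfl, by simp; omega⟩
    · exact ⟨.cons h' q, by simpa using hq⟩

/-! ### Connected patterns -/

/-- Rooted counts in `G` are counts in the punctured ball around the root: once the points sent
to `v` are removed, the other points of a connected pattern land in the punctured ball, and
their adjacencies to `v` are recorded by the augmented attribute. -/
lemma rooted_count_eq [Fintype W] (G : SimpleGraph V) (X : V → 𝒳) (T : Pat W) (Y : W → 𝒳)
    (w₀ : W) (v : V) (r : ℕ) (hc : RootCompatible T Y w₀)
    (hconn : ∀ w, T.graph.Reachable w₀ w) (hcard : Fintype.card W ≤ r + 1) (hX : X v = Y w₀) :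
    Nat.card {f : {f : W → V // pat G f = T ∧ X ∘ f = Y} // f.1 w₀ = v} =
      patCount (G.induce {u | (∃ w : G.Walk v u, w.length ≤ r) ∧ u ≠ v})
        (fun w => ((X w.1, decide (G.Adj w.1 v)) : 𝒳 × Bool))
        (T.res fun w => ¬ T.1 w₀ w) (fun w => (Y w.1, decide (T.2 w.1 w₀))) := by
  obtain ⟨h00, hc⟩ := hc
  refine Nat.card_congr
    { toFun := fun f => ⟨fun w => ⟨f.1.1 w.1, ?_, ?_⟩, ?_, ?_⟩
      invFun := fun g => ⟨⟨fun w => if h : T.1 w₀ w then v else (g.1 ⟨w, h⟩).1, ?_, ?_⟩, ?_⟩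
      left_inv := ?_
      right_inv := ?_ }
  · obtain ⟨⟨f, rfl, rfl⟩, rfl⟩ := f
    obtain ⟨p, hp⟩ := (hconn w.1).exists_isPath
    obtain ⟨q, hq⟩ := exists_walk_of_pat G f p
    exact ⟨q, by have := hp.length_lt; omega⟩
  · obtain ⟨⟨f, rfl, rfl⟩, rfl⟩ := f
    exact fun h => w.2 h.symm
  · obtain ⟨⟨f, rfl, rfl⟩, rfl⟩ := f
    simp [pat, Pat.res]
  · obtain ⟨⟨f, rfl, rfl⟩, rfl⟩ := f
    funext w
    rfl
  · obtain ⟨g, hg, hY⟩ := g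
    have hE : ∀ a b, (g a).1 = (g b).1 ↔ T.1 a.1 b.1 := fun a b => by
      have := congrFun (congrFun (congrArg Prod.fst hg) a) b
      simp only [pat, Pat.res, eq_iff_iff] at this
      rw [← this, Subtype.ext_iff]
    have hA : ∀ a b, G.Adj (g a).1 (g b).1 ↔ T.2 a.1 b.1 := fun a b => by
      have := congrFun (congrFun (congrArg Prod.snd hg) a) b
      exact this.to_iff
    have hB : ∀ a, G.Adj (g a).1 v ↔ T.2 a.1 w₀ := fun a => by
      have := congrArg Prod.snd (congrFun hY a)
      simpa using this
    have hne : ∀ a, (g a).1 ≠ v := fun a => (g a).2.2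
    refine Prod.ext ?_ ?_
    · funext a b
      simp only [pat, eq_iff_iff]
      by_cases ha : T.1 w₀ a <;> by_cases hb : T.1 w₀ b
      · simp [ha, hb, (hc a ha).2 b]
      · simp [ha, hb, (hc a ha).2 b, (hne ⟨b, hb⟩).symm]
      · simp [ha, hb, ((hc b hb).2 a).2.1, hne ⟨a, ha⟩]
      · simp [ha, hb, hE]
    · funext a b
      simp only [pat, eq_iff_iff]
      by_cases ha : T.1 w₀ a <;> by_cases hb : T.1 w₀ b
      · have := (hc a ha).2 b
        simp [ha, hb, this.2.2.1, this.2.2.2.2 hb]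
      · simp [ha, hb, ((hc a ha).2 b).2.2.1, G.adj_comm v, hB]
      · simp [ha, hb, ((hc b hb).2 a).2.2.2.1, hB]
      · simp [ha, hb, hA]
  · obtain ⟨g, hg, hY⟩ := g
    funext w
    by_cases hw : T.1 w₀ w
    · simp [hw, hX, (hc w hw).1]
    · have := congrArg Prod.fst (congrFun hY ⟨w, hw⟩)
      simpa [hw] using this
  · simp [h00]
  · rintro ⟨⟨f, rfl, rfl⟩, rfl⟩
    refine Subtype.ext (Subtype.ext (funext fun w => ?_))
    by_cases hw : f w₀ = f w
    · simp [pat, hw]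
    · simp [pat, hw]
  · rintro ⟨g, hg, hY⟩
    refine Subtype.ext (funext fun w => Subtype.ext ?_)
    simp [w.2]

/-- Sums over two index types agree when the summands are determined by labels whose multisets
agree. -/
lemma sum_eq_of_labels_eq [Fintype V] [Fintype V'] {R : Type} (h : V → R) (h' : V' → R)
    (F : V → ℕ) (F' : V' → ℕ)
    (hh : (Finset.univ : Finset V).val.map h = (Finset.univ : Finset V').val.map h')
    (hF : ∀ v v', h v = h' v' → F v = F' v') : ∑ v, F v = ∑ v', F' v' := by
  have h1 := Multiset.rel_map.1 (Multiset.rel_eq.2 hh)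
  have h2 : (Finset.univ : Finset V).val.map F = (Finset.univ : Finset V').val.map F' :=
    Multiset.rel_eq.1 (Multiset.rel_map.2 (h1.mono fun a _ b _ hab => hF a b hab))
  exact congrArg Multiset.sum h2

lemma patCount_eq_sum_rooted [Fintype V] [Finite W] (G : SimpleGraph V) (X : V → 𝒳)
    (T : Pat W) (Y : W → 𝒳) (w₀ : W) :
    patCount G X T Y =
      ∑ v, Nat.card {f : {f : W → V // pat G f = T ∧ X ∘ f = Y} // f.1 w₀ = v} := by
  rw [← Nat.card_sigma]
  exact Nat.card_congr (Equiv.sigmaFiberEquiv fun f : {f : W → V // _} => f.1 w₀).symm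

/-! ### Disconnected patterns -/

/-- The product formula: pairs of realisations of the restrictions of `T` to `p` and to its
complement are the realisations of all patterns with the same two restrictions. The formula needs
no hypothesis on `T`; it is useful when `T` has no relation between `p` and its complement, for
then every other pattern in the sum is strictly larger than `T`. -/
lemma patCount_mul [Finite V] [Finite W] (G : SimpleGraph V) (X : V → 𝒳)
    (T : Pat W) (Y : W → 𝒳) (p : W → Prop) [Fintype (Pat W)] :
    patCount G X (T.res p) (fun w => Y w) * patCount G X (T.res fun w => ¬ p w) (fun w => Y w) =
      patCount G X T Y + ∑ T' : {T' : Pat W // (T'.res p = T.res p ∧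
        (T'.res fun w => ¬ p w) = T.res fun w => ¬ p w) ∧ T' ≠ T}, patCount G X T'.1 Y := by
  let Q : Pat W → Prop := fun T' => T'.res p = T.res p ∧
        (T'.res fun w => ¬ p w) = T.res fun w => ¬ p w
  have e1 : patCount G X (T.res p) (fun w => Y w) *
      patCount G X (T.res fun w => ¬ p w) (fun w => Y w) =
      Nat.card {f : W → V // Q (pat G f) ∧ X ∘ f = Y} := by
    unfold patCount
    rw [← Nat.card_prod]
    refine Nat.card_congr ((Equiv.subtypeProdEquivProd).symm.trans
      (Equiv.subtypeEquiv (Equiv.piEquivPiSubtypeProd p (fun _ => V)).symm ?_))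
    intro g
    obtain ⟨f, rfl⟩ := (Equiv.piEquivPiSubtypeProd p (fun _ => V)).surjective g
    rw [Equiv.symm_apply_apply]
    have : X ∘ f = Y ↔ (X ∘ (fun w : {w // p w} => f w) = fun w : {w // p w} => Y w) ∧
        (X ∘ (fun w : {w // ¬ p w} => f w) = fun w : {w // ¬ p w} => Y w) := by
      simp only [funext_iff, Function.comp_apply, Subtype.forall]
      exact ⟨fun h => ⟨fun a _ => h a, fun a _ => h a⟩,
        fun h a => (Classical.em (p a)).elim (h.1 a) (h.2 a)⟩
    rw [this]
    exact ⟨fun h => ⟨⟨h.1.1, h.2.1⟩, h.1.2, h.2.2⟩, fun h => ⟨⟨h.1.1, h.2.1⟩, h.1.2, h.2.2⟩⟩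
  have e2 : Nat.card {f : W → V // Q (pat G f) ∧ X ∘ f = Y} =
      ∑ T' : {T' : Pat W // Q T'}, patCount G X T'.1 Y := by
    unfold patCount
    rw [← Nat.card_sigma]
    exact Nat.card_congr
      { toFun := fun f => ⟨⟨pat G f.1, f.2.1⟩, f.1, rfl, f.2.2⟩
        invFun := fun f => ⟨f.2.1, by rw [f.2.2.1]; exact f.1.2, f.2.2.2⟩
        left_inv := fun f => rfl
        right_inv := by
          rintro ⟨⟨T', hT'⟩, f, hf, hf'⟩
          have hf : pat G f = T' := hf
          subst hf
          rfl }
  rw [e1, e2]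
  have e3 : ∀ (P : Pat W → Prop) [Fintype {T' : Pat W // P T'}],
      ∑ T' : {T' : Pat W // P T'}, patCount G X T'.1 Y =
      ∑ T' ∈ Finset.univ.filter P, patCount G X T' Y := fun P _ =>
    (Finset.sum_subtype (Finset.univ.filter P) (fun T' => Finset.mem_filter_univ T')
      fun T' => patCount G X T' Y).symm
  rw [e3, e3, ← Finset.add_sum_erase _ _ (a := T) (by simp [Q])]
  congr 1
  refine Finset.sum_congr ?_ fun _ _ => rfl
  ext T'
  simp [Q, and_comm]

/-- Agreement on connected patterns with at most `m` points implies agreement on all patterns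
with at most `m` points. For a disconnected pattern, the product formula expresses its count through counts of patterns on fewer points and
of patterns with strictly more relations. -/
lemma patCount_eq_of_connected [Finite V] [Finite V'] (G : SimpleGraph V) (X : V → 𝒳)
    (G' : SimpleGraph V') (X' : V' → 𝒳) (m : ℕ)
    (H : ∀ (W : Type) [Fintype W], Fintype.card W ≤ m → ∀ (w₀ : W) (T : Pat W) (Y : W → 𝒳),
      (∀ w, T.graph.Reachable w₀ w) → patCount G X T Y = patCount G' X' T Y) :
    ∀ (k : ℕ) (W : Type) [Fintype W], Fintype.card W = k → k ≤ m → ∀ (T : Pat W) (Y : W → 𝒳),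
      patCount G X T Y = patCount G' X' T Y := by
  intro k
  induction k using Nat.strong_induction_on with
  | _ k ih =>
  intro W _ hk hm T Y
  rcases isEmpty_or_nonempty W with hW | ⟨⟨w₀⟩⟩
  · exact Nat.card_congr
      { toFun := fun _ => ⟨isEmptyElim, Subsingleton.elim _ _, Subsingleton.elim _ _⟩
        invFun := fun _ => ⟨isEmptyElim, Subsingleton.elim _ _, Subsingleton.elim _ _⟩
        left_inv := fun _ => Subsingleton.elim _ _
        right_inv := fun _ => Subsingleton.elim _ _ }
  have hwf : WellFounded ((· > ·) : Pat W → Pat W → Prop) := wellFounded_gt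
  induction T using hwf.induction with
  | _ T ihT =>
  by_cases hconn : ∀ w, T.graph.Reachable w₀ w
  · exact H W (hk ▸ hm) w₀ T Y hconn
  push Not at hconn
  obtain ⟨w₁, hw₁⟩ := hconn
  let p : W → Prop := fun w => T.graph.Reachable w₀ w
  let _ : Fintype (Pat W) := Fintype.ofFinite _
  have hp : Fintype.card {w // p w} < k := hk ▸ Fintype.card_subtype_lt hw₁
  have hn : Fintype.card {w // ¬ p w} < k :=
    hk ▸ Fintype.card_subtype_lt (x := w₀) (fun h => h (SimpleGraph.Reachable.refl _))
  have key := patCount_mul G X T Y p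
  have key' := patCount_mul G' X' T Y p
  rw [ih _ hp _ rfl (by omega), ih _ hn _ rfl (by omega), key'] at key
  have hsum : ∀ T' : {T' : Pat W // (T'.res p = T.res p ∧
        (T'.res fun w => ¬ p w) = T.res fun w => ¬ p w) ∧ T' ≠ T},
      patCount G X T'.1 Y = patCount G' X' T'.1 Y := by
    rintro ⟨T', ⟨h1, h2⟩, hne⟩
    refine ihT T' (lt_of_le_of_ne ?_ hne.symm)
    -- `T` has no relation between `p` and its complement, so `T'` can only have more relations.
    have hcross : ∀ a b, T.1 a b ∨ T.2 a b → (p a ↔ p b) := by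
      intro a b hab
      by_cases h : a = b
      · rw [h]
      have hadj : T.graph.Adj a b := by
        simp only [Pat.graph, SimpleGraph.fromRel_adj]
        exact ⟨h, .inl hab⟩
      exact ⟨fun h => h.trans hadj.reachable, fun h => h.trans hadj.symm.reachable⟩
    have e1 : ∀ a b, (p a ↔ p b) → (T'.1 a b ↔ T.1 a b) ∧ (T'.2 a b ↔ T.2 a b) := by
      intro a b hab
      by_cases ha : p a
      · have hb := hab.1 ha
        exact ⟨(congrFun (congrFun (congrArg Prod.fst h1) ⟨a, ha⟩) ⟨b, hb⟩).to_iff,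
          (congrFun (congrFun (congrArg Prod.snd h1) ⟨a, ha⟩) ⟨b, hb⟩).to_iff⟩
      · have hb := fun h => ha (hab.2 h)
        exact ⟨(congrFun (congrFun (congrArg Prod.fst h2) ⟨a, ha⟩) ⟨b, hb⟩).to_iff,
          (congrFun (congrFun (congrArg Prod.snd h2) ⟨a, ha⟩) ⟨b, hb⟩).to_iff⟩
    exact ⟨fun a b h => (e1 a b (hcross a b (.inl h))).1.2 h,
      fun a b h => (e1 a b (hcross a b (.inr h))).2.2 h⟩
  rw [Finset.sum_congr rfl fun T' _ => hsum T'] at key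
  omega

/-! ### The encoding determines the pattern counts -/

/-- The list `[t, t - 1, ..., 1]`. -/
def descList : ℕ → List ℕ
  | 0 => []
  | t + 1 => (t + 1) :: descList t

lemma ofFn_eq_descList (t : ℕ) : List.ofFn (fun i : Fin t => t - (i : ℕ)) = descList t := by
  induction t with
  | zero => rfl
  | succ t ih =>
    rw [List.ofFn_succ, descList, ← ih]
    simp

/-- The encoding with parameters `(t, ..., 1)` determines all pattern counts on at most `t + 1`
points. -/
lemma patCount_eq_of_enc_eq (t : ℕ) : ∀ (𝒳 V V' : Type) (inst : Fintype V)
    (inst' : Fintype V') (G : SimpleGraph V) (X : V → 𝒳) (G' : SimpleGraph V') (X' : V' → 𝒳),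
    (Finset.univ : Finset V).val.map (rnpHAux (descList t) V inst 𝒳 G X) =
      (Finset.univ : Finset V').val.map (rnpHAux (descList t) V' inst' 𝒳 G' X') →
    ∀ (W : Type) [Fintype W], Fintype.card W ≤ t + 1 → ∀ (T : Pat W) (Y : W → 𝒳),
      patCount G X T Y = patCount G' X' T Y := by
  induction t with
  | zero =>
    intro 𝒳 V V' inst inst' G X G' X' henc W _ hW T Y
    refine patCount_eq_of_connected G X G' X' 1 ?_ _ W rfl hW T Y
    intro W _ hW w₀ T Y _
    rw [patCount_eq_sum_rooted _ _ _ _ w₀, patCount_eq_sum_rooted _ _ _ _ w₀]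
    refine sum_eq_of_labels_eq _ _ _ _ henc fun v v' hv => ?_
    have hv : X v = X' v' := hv
    have : Subsingleton W := Fintype.card_le_one_iff_subsingleton.1 hW
    have hconst : ∀ {V : Type} (f : W → V) (v : V), f w₀ = v → f = fun _ => v :=
      fun f v h => funext fun w => by rw [Subsingleton.elim w w₀, h]
    have hpat : pat G (fun _ : W => v) = pat G' (fun _ : W => v') := by simp [pat]
    have hattr : X ∘ (fun _ : W => v) = X' ∘ (fun _ : W => v') := by
      funext w; simp [hv]
    exact Nat.card_congr
      { toFun := fun f => ⟨⟨fun _ => v', by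
          rw [← hpat, ← hattr, ← hconst _ _ f.2]; exact f.1.2⟩, rfl⟩
        invFun := fun f => ⟨⟨fun _ => v, by
          rw [hpat, hattr, ← hconst _ _ f.2]; exact f.1.2⟩, rfl⟩
        left_inv := fun f => Subtype.ext (Subtype.ext (hconst _ _ f.2).symm)
        right_inv := fun f => Subtype.ext (Subtype.ext (hconst _ _ f.2).symm) }
  | succ t ih =>
    intro 𝒳 V V' inst inst' G X G' X' henc W _ hW T Y
    refine patCount_eq_of_connected G X G' X' (t + 1 + 1) ?_ _ W rfl hW T Y
    intro W _ hW w₀ T Y hconn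
    rw [patCount_eq_sum_rooted _ _ _ _ w₀, patCount_eq_sum_rooted _ _ _ _ w₀]
    refine sum_eq_of_labels_eq _ _ _ _ henc fun v v' hv => ?_
    have hv' := Prod.mk.inj hv
    have hX : X v = X' v' := hv'.1
    by_cases hc : RootCompatible T Y w₀ ∧ X v = Y w₀
    · rw [rooted_count_eq G X T Y w₀ v (t + 1) hc.1 hconn hW hc.2,
        rooted_count_eq G' X' T Y w₀ v' (t + 1) hc.1 hconn hW (hX ▸ hc.2)]
      refine ih _ _ _ (Fintype.ofFinite _) (Fintype.ofFinite _) _ _ _ _ hv'.2 _ ?_ _ _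
      have : Fintype.card {w // ¬ T.1 w₀ w} < Fintype.card W :=
        Fintype.card_subtype_lt (x := w₀) (fun h => h hc.1.1)
      omega
    · have h1 : IsEmpty {f : {f : W → V // pat G f = T ∧ X ∘ f = Y} // f.1 w₀ = v} := by
        refine ⟨?_⟩
        rintro ⟨⟨f, rfl, rfl⟩, rfl⟩
        exact hc ⟨rootCompatible_of_realised G X f w₀, rfl⟩
      have h2 : IsEmpty {f : {f : W → V' // pat G' f = T ∧ X' ∘ f = Y} // f.1 w₀ = v'} := by
        refine ⟨?_⟩
        rintro ⟨⟨f, rfl, rfl⟩, rfl⟩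
        exact hc ⟨rootCompatible_of_realised G' X' f w₀, hX⟩
      rw [Nat.card_of_isEmpty, Nat.card_of_isEmpty]

/-- Equal pattern counts give a bijection of maps preserving patterns and attributes. -/
lemma exists_equiv_of_patCount_eq [Finite V] [Finite V'] [Finite W] (G : SimpleGraph V)
    (X : V → 𝒳) (G' : SimpleGraph V') (X' : V' → 𝒳)
    (H : ∀ (T : Pat W) (Y : W → 𝒳), patCount G X T Y = patCount G' X' T Y) :
    ∃ e : (W → V) ≃ (W → V'), ∀ f, pat G' (e f) = pat G f ∧ X' ∘ e f = X ∘ f := by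
  let F : (W → V) → Pat W × (W → 𝒳) := fun f => (pat G f, X ∘ f)
  let F' : (W → V') → Pat W × (W → 𝒳) := fun f => (pat G' f, X' ∘ f)
  have hfib : ∀ c, Nonempty ({f // F f = c} ≃ {f // F' f = c}) := by
    rintro ⟨T, Y⟩
    obtain ⟨e⟩ := Finite.card_eq.1 (H T Y)
    refine ⟨((Equiv.subtypeEquivRight fun f => ?_).trans e).trans
      (Equiv.subtypeEquivRight fun f => ?_)⟩ <;> simp [F, F', Prod.ext_iff]
  let e := Equiv.ofFiberEquiv fun c => (hfib c).some
  have he : ∀ f, F' (e f) = F f := Equiv.ofFiberEquiv_map _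
  exact ⟨e, fun f => ⟨congrArg Prod.fst (he f), congrArg Prod.snd (he f)⟩⟩

end Patterns

/-! ### From pattern counts to local functions -/

section Subsets

variable {V V' 𝒳 A : Type}

/-- A `k`-element set is the image of exactly `k!` injections from `Fin k`. -/
lemma card_injective_image [Fintype V] (k : ℕ) (P : Finset V → Prop) :
    Nat.card {f : Fin k → V // Function.Injective f ∧ P (Finset.univ.image f)} =
      k.factorial * Nat.card {S : Finset V // S.card = k ∧ P S} := by
  have himg : ∀ (S : Finset V) (e : Fin k ≃ S),
      Finset.univ.image (fun i => (e i : V)) = S := by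
    intro S e
    ext x
    simp only [Finset.mem_image, Finset.mem_univ, true_and]
    exact ⟨fun ⟨i, hi⟩ => hi ▸ (e i).2, fun hx => ⟨e.symm ⟨x, hx⟩, by simp⟩⟩
  let F : (Σ S : {S : Finset V // S.card = k ∧ P S}, Fin k ≃ S.1) →
      {f : Fin k → V // Function.Injective f ∧ P (Finset.univ.image f)} := fun x =>
    ⟨fun i => x.2 i, Subtype.val_injective.comp x.2.injective, by
      rw [himg]; exact x.1.2.2⟩
  have hF : Function.Bijective F := by
    constructor
    · rintro ⟨⟨S, hS⟩, e⟩ ⟨⟨S', hS'⟩, e'⟩ h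
      have h : (fun i => (e i : V)) = fun i => (e' i : V) := congrArg Subtype.val h
      have hSS : S = S' := by rw [← himg S e, ← himg S' e', h]
      subst hSS
      have : e = e' := Equiv.ext fun i => Subtype.ext (congrFun h i)
      rw [this]
    · rintro ⟨f, hf, hP⟩
      have hb : Function.Bijective
          (fun i => (⟨f i, by simp⟩ : (Finset.univ.image f : Finset V))) := by
        refine ⟨fun i j h => hf (congrArg Subtype.val h), ?_⟩
        rintro ⟨x, hx⟩
        obtain ⟨i, -, rfl⟩ := Finset.mem_image.1 hx
        exact ⟨i, rfl⟩
      exact ⟨⟨⟨Finset.univ.image f, by simp [Finset.card_image_of_injective _ hf], hP⟩,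
        Equiv.ofBijective _ hb⟩, rfl⟩
  rw [← Nat.card_congr (Equiv.ofBijective F hF), Nat.card_sigma,
    Finset.sum_congr rfl (g := fun _ => k.factorial), Finset.sum_const, Finset.card_univ,
    Nat.card_eq_fintype_card, smul_eq_mul, mul_comm]
  rintro ⟨S, hS, -⟩ -
  rw [Nat.card_eq_fintype_card,
    Fintype.card_equiv (Fintype.equivOfCardEq (by simp [hS])), Fintype.card_fin]

/-- The value of `ψ` on the attributed subgraph induced on `S`. -/
def inducedValue (ψ : ((W : Type) × (SimpleGraph W × (W → 𝒳))) → A) (G : SimpleGraph V)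
    (X : V → 𝒳) (S : Finset V) : A :=
  ψ ⟨(↑S : Set V), (G.induce (↑S : Set V), fun u => X u.1)⟩

lemma inducedValue_image (ψ : ((W : Type) × (SimpleGraph W × (W → 𝒳))) → A)
    (hψ : ∀ (W₁ W₂ : Type) (H₁ : SimpleGraph W₁) (Y₁ : W₁ → 𝒳)
        (H₂ : SimpleGraph W₂) (Y₂ : W₂ → 𝒳),
      AttrIso H₁ Y₁ H₂ Y₂ → ψ ⟨W₁, H₁, Y₁⟩ = ψ ⟨W₂, H₂, Y₂⟩)
    (G : SimpleGraph V) (X : V → 𝒳) {k : ℕ} (f : Fin k → V) (hf : Function.Injective f) :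
    inducedValue ψ G X (Finset.univ.image f) = ψ ⟨Fin k, G.comap f, X ∘ f⟩ := by
  have hb : Function.Bijective
      (fun i => (⟨f i, by simp⟩ : ((Finset.univ.image f : Finset V) : Set V))) := by
    refine ⟨fun i j h => hf (congrArg Subtype.val h), ?_⟩
    rintro ⟨x, hx⟩
    obtain ⟨i, -, rfl⟩ := Finset.mem_image.1 (Finset.mem_coe.1 hx)
    exact ⟨i, rfl⟩
  refine (hψ _ _ _ _ _ _ ⟨⟨Equiv.ofBijective _ hb, ?_⟩, fun v => rfl⟩).symm
  intro a b
  rfl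

/-- Graphs with equal pattern counts on at most `r` points have the same multiset of values
`ψ(G(S))`, `|S| ≤ r`. -/
lemma map_inducedValue_eq [Fintype V] [Fintype V']
    (ψ : ((W : Type) × (SimpleGraph W × (W → 𝒳))) → A)
    (hψ : ∀ (W₁ W₂ : Type) (H₁ : SimpleGraph W₁) (Y₁ : W₁ → 𝒳)
        (H₂ : SimpleGraph W₂) (Y₂ : W₂ → 𝒳),
      AttrIso H₁ Y₁ H₂ Y₂ → ψ ⟨W₁, H₁, Y₁⟩ = ψ ⟨W₂, H₂, Y₂⟩)
    (G : SimpleGraph V) (X : V → 𝒳) (G' : SimpleGraph V') (X' : V' → 𝒳) (r : ℕ)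
    (H : ∀ k ≤ r, ∀ (T : Pat (Fin k)) (Y : Fin k → 𝒳),
      patCount G X T Y = patCount G' X' T Y) :
    ((Finset.univ : Finset (Finset V)).filter fun S => S.card ≤ r).val.map
        (inducedValue ψ G X) =
      ((Finset.univ : Finset (Finset V')).filter fun S => S.card ≤ r).val.map
        (inducedValue ψ G' X') := by
  have hk : ∀ k ≤ r, ∀ a, Nat.card {S : Finset V // S.card = k ∧ a = inducedValue ψ G X S} =
      Nat.card {S : Finset V' // S.card = k ∧ a = inducedValue ψ G' X' S} := by
    intro k hk a
    refine Nat.eq_of_mul_eq_mul_left k.factorial_pos ?_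
    rw [← card_injective_image, ← card_injective_image]
    obtain ⟨e, he⟩ := exists_equiv_of_patCount_eq G X G' X' (H k hk)
    refine Nat.card_congr (Equiv.subtypeEquiv e fun f => ?_)
    obtain ⟨hp, hX⟩ := he f
    have hinj : Function.Injective f ↔ Function.Injective (e f) := by
      have : ∀ a b, e f a = e f b ↔ f a = f b := fun a b =>
        (congrFun (congrFun (congrArg Prod.fst hp) a) b).to_iff
      simp only [Function.Injective, this]
    have hadj : G'.comap (e f) = G.comap f := by
      ext a b
      exact (congrFun (congrFun (congrArg Prod.snd hp) a) b).to_iff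
    rw [← hinj]
    refine and_congr_right fun hf => ?_
    rw [inducedValue_image ψ hψ G X f hf, inducedValue_image ψ hψ G' X' (e f) (hinj.1 hf),
      hadj, hX]
  have hcount : ∀ {V : Type} [Fintype V] (g : Finset V → A) (a : A),
      (((Finset.univ : Finset (Finset V)).filter fun S => S.card ≤ r).val.map g).count a =
        ∑ k ∈ Finset.range (r + 1), Nat.card {S : Finset V // S.card = k ∧ a = g S} := by
    intro V _ g a
    rw [Multiset.count_map, ← Finset.filter_val, Finset.card_val,
      Finset.card_eq_sum_card_fiberwise (f := Finset.card) (t := Finset.range (r + 1))]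
    · refine Finset.sum_congr rfl fun k hk => ?_
      rw [Nat.card_eq_fintype_card, Fintype.card_subtype]
      congr 1
      ext S
      have := Finset.mem_range.1 hk
      simp only [Finset.mem_filter, Finset.mem_univ, true_and]
      constructor
      · rintro ⟨⟨-, h⟩, h'⟩
        exact ⟨h', h⟩
      · rintro ⟨h, h'⟩
        exact ⟨⟨by omega, h'⟩, h⟩
    · intro S hS
      have hS := (Finset.mem_filter.1 (Finset.mem_filter.1 (Finset.mem_coe.1 hS)).1).2
      simp only [Finset.coe_range, Set.mem_Iio]
      omega
  ext a
  rw [hcount, hcount]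
  exact Finset.sum_congr rfl fun k h => hk k (by have := Finset.mem_range.1 h; omega) a

end Subsets

/-- Every `r`-local graph function
`ℓ(G) = φ({{ ψ(G(S)) : S ⊆ V(G), |S| ≤ r }})`, for an isomorphism-invariant `ψ` on
attributed graphs and a multiset function `φ`, factors through the RNP encoding with
recursion parameters `(r-1, r-2, ..., 1)`. -/
theorem rnp_universal_for_local_functions {𝒳 A B : Type} [Countable 𝒳] {n r : ℕ}
    (hr : 2 ≤ r)
    (ψ : ((W : Type) × (SimpleGraph W × (W → 𝒳))) → A)
    (hψ : ∀ (W₁ W₂ : Type) (H₁ : SimpleGraph W₁) (Y₁ : W₁ → 𝒳)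
        (H₂ : SimpleGraph W₂) (Y₂ : W₂ → 𝒳),
      AttrIso H₁ Y₁ H₂ Y₂ → ψ ⟨W₁, H₁, Y₁⟩ = ψ ⟨W₂, H₂, Y₂⟩)
    (φ : Multiset A → B)
    (ℓ : SimpleGraph (Fin n) → (Fin n → 𝒳) → B)
    (hℓ : ∀ (G : SimpleGraph (Fin n)) (X : Fin n → 𝒳),
      ℓ G X = φ ((((Finset.univ : Finset (Finset (Fin n))).filter
          (fun S => S.card ≤ r)).val).map
        (fun S => ψ ⟨(↑(S : Finset (Fin n)) : Set (Fin n)),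
          (G.induce (↑S : Set (Fin n)), fun u => X u.1)⟩))) :
    ∃ ξ : Multiset (RNPType (List.ofFn (fun i : Fin (r - 1) => r - 1 - (i : ℕ))).length 𝒳)
        → B,
      ∀ (G : SimpleGraph (Fin n)) (X : Fin n → 𝒳),
        ℓ G X = ξ (rnpEnc G X (List.ofFn (fun i : Fin (r - 1) => r - 1 - (i : ℕ)))) := by
  have hlist := ofFn_eq_descList (r - 1)
  generalize List.ofFn (fun i : Fin (r - 1) => r - 1 - (i : ℕ)) = L at hlist ⊢
  subst hlist
  let enc : SimpleGraph (Fin n) × (Fin n → 𝒳) → Multiset (RNPType (descList (r - 1)).length 𝒳) :=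
    fun p => rnpEnc p.1 p.2 (descList (r - 1))
  have hfac : Function.FactorsThrough (fun p => ℓ p.1 p.2) enc := by
    rintro ⟨G, X⟩ ⟨G', X'⟩ h
    have h : rnpEnc G X (descList (r - 1)) = rnpEnc G' X' (descList (r - 1)) := h
    have hcount := patCount_eq_of_enc_eq (r - 1) 𝒳 _ _ _ _ G X G' X' h
    show ℓ G X = ℓ G' X'
    rw [hℓ, hℓ]
    refine congrArg φ (map_inducedValue_eq ψ hψ G X G' X' r fun k hk T Y => ?_)
    exact hcount (Fin k) (by rw [Fintype.card_fin]; omega) T Y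
  exact ⟨Function.extend enc (fun p => ℓ p.1 p.2) (fun _ => φ 0),
    fun G X => (hfac.extend_apply (fun _ => φ 0) (G, X)).symm⟩
end
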